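/- For -1/2 < α < 1/2, λ ≥ 0 and every n ≥ 1, the monic Gegenbauer–Sobolev polynomial Q_{n,λ}^{(α)} has at most two zeros outside the interval [-1, 1], and any zeros outside [-1,1] form a pair symmetric with respect to the origin: if x is a zero of Q_{n,λ}^{(α)} with |x| > 1, then -x is also a zero, and every other zero lies in [-1,1]. -/

import Mathlib

open Polynomial MeasureTheory Real Set

/-- The Gegenbauer inner product `∫ f g (1-x²)^{α-1/2}` on `(-1,1)`. -/
noncomputable def gegInner (α : ℝ) (f g : Polynomial ℝ) : ℝ :=
  ∫ x in Set.Ioo (-1 : ℝ) 1, f.eval x * g.eval x * (1 - x ^ 2) ^ (α - 1/2)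

/-- `C` is the monic Gegenbauer polynomial of degree `n` for parameter `α`. -/
def IsMonicGegenbauer (α : ℝ) (n : ℕ) (C : Polynomial ℝ) : Prop :=
  C.Monic ∧ C.natDegree = n ∧
    ∀ p : Polynomial ℝ, p.degree < (n : ℕ) → gegInner α C p = 0

/-- The Gegenbauer–Sobolev inner product. -/
noncomputable def sobInner (α lam : ℝ) (f g : Polynomial ℝ) : ℝ :=
  gegInner α f g + lam * gegInner α (derivative f) (derivative g)

/-- `Q` is the monic Gegenbauer–Sobolev polynomial of degree `n`. -/
def IsMonicGegSobolev (α lam : ℝ) (n : ℕ) (Q : Polynomial ℝ) : Prop :=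
  Q.Monic ∧ Q.natDegree = n ∧
    ∀ p : Polynomial ℝ, p.degree < (n : ℕ) → sobInner α lam Q p = 0

/-!
Let `J` be the moment functional of the weight, `K` the monic Gegenbauer polynomial of degree
`k + 1`, and `S` the primitive of `(k + 2) K` with `J S = 0`. Integration by parts and parity show
that, on polynomials of degree less than `k + 2`, the Sobolev pairing with `S` only sees the
coefficient of `X ^ k`, with a nonpositive factor. So does the pairing with `Q_k`, with a positive
factor; hence `Q_{k+2} = S + t Q_k` with `t ≥ 0`, that is, `Q_{k+2}' = (k + 2) K + t Q_k'`. As `K`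
is positive on `[1, ∞)`, induction in steps of two gives `Q_n' > 0` there, so `Q_n` has at most one
zero beyond `1`, and the parity of `Q_n` reflects this to the left of `-1`.
-/

section BilinForm

variable {R : Type*} [CommRing R] {B : LinearMap.BilinForm R R[X]} {n : ℕ} {P Q : R[X]}

/-- `Q` is a monic orthogonal polynomial of degree `n` for the bilinear form `B`. As `B` need not
be symmetric, this means orthogonality with `Q` in the left argument. -/
structure IsMonicOrthogonal (B : LinearMap.BilinForm R R[X]) (n : ℕ) (Q : R[X]) : Prop where
  isMonicOfDegree : IsMonicOfDegree Q n
  apply_eq_zero : ∀ p : R[X], p.degree < n → B Q p = 0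

lemma degree_sub_lt_of_isMonicOfDegree (hP : IsMonicOfDegree P n) (hQ : IsMonicOfDegree Q n) :
    (P - Q).degree < n :=
  (degree_lt_iff_coeff_zero _ _).2 fun m hm => by rw [coeff_sub, hP.coeff_eq hQ hm, sub_self]

lemma comp_neg_X_coeff (p : R[X]) (m : ℕ) : (p.comp (-X)).coeff m = (-1) ^ m * p.coeff m := by
  rw [show (-X : R[X]) = C (-1) * X by simp, comp_C_mul_X_coeff, mul_comm]

lemma linearMap_eq_coeff_smul_of_degree_lt {M : Type*} [AddCommGroup M] [Module R M]
    {L : R[X] →ₗ[R] M} {k : ℕ} (hlow : ∀ j < k, L (X ^ j) = 0) (htop : L (X ^ (k + 1)) = 0)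
    {p : R[X]} (hp : p.degree < (k + 2 : ℕ)) : L p = p.coeff k • L (X ^ k) := by
  rcases eq_or_ne p 0 with rfl | hp0
  · rw [map_zero, coeff_zero, zero_smul]
  have hsum : L p = ∑ i ∈ Finset.range (k + 2), p.coeff i • L (X ^ i) := by
    conv_lhs => rw [p.as_sum_range' (k + 2) ((natDegree_lt_iff_degree_lt hp0).2 hp)]
    simp only [map_sum, ← smul_X_eq_monomial, map_smul]
  rw [hsum, Finset.sum_range_succ, Finset.sum_range_succ, htop, smul_zero, add_zero,
    Finset.sum_eq_zero fun i hi => by rw [hlow i (Finset.mem_range.1 hi), smul_zero], zero_add]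

namespace IsMonicOrthogonal

lemma apply_X_pow_of_lt (hQ : IsMonicOrthogonal B n Q) {j : ℕ} (hj : j < n) : B Q (X ^ j) = 0 :=
  hQ.apply_eq_zero _ ((degree_X_pow_le j).trans_lt (by exact_mod_cast hj))

lemma apply_X_pow_self [Nontrivial R] (hQ : IsMonicOrthogonal B n Q) : B Q (X ^ n) = B Q Q := by
  have := hQ.apply_eq_zero _
    (degree_sub_lt_of_isMonicOfDegree (isMonicOfDegree_X_pow R n) hQ.isMonicOfDegree)
  rwa [map_sub, sub_eq_zero] at this

lemma eq (hP : IsMonicOrthogonal B n P) (hQ : IsMonicOrthogonal B n Q)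
    (hB : ∀ f, B f f = 0 → f = 0) : P = Q := by
  have hd := degree_sub_lt_of_isMonicOfDegree hP.isMonicOfDegree hQ.isMonicOfDegree
  refine sub_eq_zero.1 (hB _ ?_)
  rw [LinearMap.map_sub₂, hP.apply_eq_zero _ hd, hQ.apply_eq_zero _ hd, sub_self]

lemma comp_neg_X (hQ : IsMonicOrthogonal B n Q) (hB : ∀ f, B f f = 0 → f = 0)
    (hneg : ∀ f g, B (f.comp (-X)) (g.comp (-X)) = B f g) :
    Q.comp (-X) = (-1 : R) ^ n • Q := by
  set D := Q.comp (-X) - (-1 : R) ^ n • Q with hD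
  have hdeg : D.degree < n := by
    refine (degree_lt_iff_coeff_zero _ _).2 fun m hm => ?_
    rw [hD, coeff_sub, coeff_smul, comp_neg_X_coeff, smul_eq_mul]
    rcases hm.eq_or_lt with rfl | hlt
    · rw [sub_self]
    · rw [coeff_eq_zero_of_natDegree_lt (hQ.isMonicOfDegree.natDegree_eq.trans_lt hlt),
        mul_zero, mul_zero, sub_zero]
  have hcomp : B (Q.comp (-X)) D = 0 := by
    rw [← comp_neg_X_comp_neg_X D, hneg]
    exact hQ.apply_eq_zero _ (degree_comp_neg_X.trans_lt hdeg)
  refine sub_eq_zero.1 (hB D ?_)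
  nth_rw 1 [hD]
  rw [LinearMap.map_sub₂, LinearMap.map_smul₂, hcomp, hQ.apply_eq_zero D hdeg, smul_zero, sub_zero]

lemma apply_X_pow_succ [IsDomain R] [CharZero R] (hQ : IsMonicOrthogonal B n Q)
    (hB : ∀ f, B f f = 0 → f = 0) (hneg : ∀ f g, B (f.comp (-X)) (g.comp (-X)) = B f g) :
    B Q (X ^ (n + 1)) = 0 := by
  have hX : (X ^ (n + 1) : R[X]).comp (-X) = (-1 : R) ^ (n + 1) • X ^ (n + 1) := by
    rw [X_pow_comp, neg_pow, smul_eq_C_mul, C_pow, C_neg, C_1]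
  have hsign : (-1 : R) ^ (n + 1) * (-1) ^ n = -1 := by
    rw [← pow_add]; exact Odd.neg_one_pow ⟨n, by ring⟩
  have h := hneg Q (X ^ (n + 1))
  rw [hQ.comp_neg_X hB hneg, hX, map_smul, LinearMap.map_smul₂, smul_smul, hsign, neg_smul,
    one_smul] at h
  exact self_eq_neg.1 h.symm

lemma add_smul [IsDomain R] [CharZero R] {k : ℕ} {S : R[X]} {c t : R}
    (hP : IsMonicOrthogonal B k P) (hB : ∀ f, B f f = 0 → f = 0)
    (hneg : ∀ f g, B (f.comp (-X)) (g.comp (-X)) = B f g) (hS : IsMonicOfDegree S (k + 2))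
    (hBS : ∀ p : R[X], p.degree < (k + 2 : ℕ) → B S p = p.coeff k * c) (ht : c + t * B P P = 0) :
    IsMonicOrthogonal B (k + 2) (S + t • P) := by
  refine ⟨hS.add_right ?_, fun p hp => ?_⟩
  · calc (t • P).natDegree ≤ P.natDegree := natDegree_smul_le t P
      _ = k := hP.isMonicOfDegree.natDegree_eq
      _ < k + 2 := by lia
  · have hBP : B P p = p.coeff k * B P P := by
      rw [← hP.apply_X_pow_self]
      exact linearMap_eq_coeff_smul_of_degree_lt (fun _ => hP.apply_X_pow_of_lt)
        (hP.apply_X_pow_succ hB hneg) hp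
    rw [LinearMap.map_add₂, LinearMap.map_smul₂, hBS p hp, hBP, smul_eq_mul]
    linear_combination p.coeff k * ht

end IsMonicOrthogonal

lemma exists_isMonicOrthogonal {K : Type*} [Field K] {B : LinearMap.BilinForm K K[X]}
    (hB : ∀ f, B f f = 0 → f = 0) (n : ℕ) : ∃ Q, IsMonicOrthogonal B n Q := by
  let V := degreeLT K n
  have : FiniteDimensional K V := Module.Finite.equiv (degreeLTEquiv K n).symm
  have hV : (B.restrict V).Nondegenerate :=
    ⟨fun v hv => Subtype.ext (hB v (hv v)), fun v hv => Subtype.ext (hB v (hv v))⟩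
  let r := ((B.restrict V).toDual hV).symm ((B (X ^ n)).domRestrict V)
  have hr : (r : K[X]).degree < n := mem_degreeLT.1 r.2
  refine ⟨X ^ n - (r : K[X]), ⟨?_, ?_⟩, fun p hp => ?_⟩
  · exact natDegree_eq_of_degree_eq_some (by
      rw [degree_sub_eq_left_of_degree_lt (by rwa [degree_X_pow]), degree_X_pow])
  · exact monic_X_pow_sub (by simpa using hr)
  · have : B r p = B (X ^ n) p :=
      LinearMap.BilinForm.apply_toDual_symm_apply (hB := hV) _ ⟨p, mem_degreeLT.2 hp⟩
    rw [LinearMap.map_sub₂, this, sub_self]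

end BilinForm

section Forms

variable {R : Type*} [CommRing R] {J : R[X] →ₗ[R] R} {lam : R}

/-- The bilinear form `(f, g) ↦ J (f g)` attached to a moment functional `J`. -/
noncomputable def momentForm (J : R[X] →ₗ[R] R) : LinearMap.BilinForm R R[X] :=
  (LinearMap.mul R R[X]).compr₂ J

/-- The Sobolev form `(f, g) ↦ J (f g) + λ J (f' g')` attached to a moment functional `J`. -/
noncomputable def sobolevForm (J : R[X] →ₗ[R] R) (lam : R) : LinearMap.BilinForm R R[X] :=
  momentForm J + lam • (momentForm J).compl₁₂ derivative derivative

@[simp]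
lemma momentForm_apply (f g : R[X]) : momentForm J f g = J (f * g) := rfl

@[simp]
lemma sobolevForm_apply (f g : R[X]) :
    sobolevForm J lam f g = J (f * g) + lam * J (derivative f * derivative g) := rfl

lemma momentForm_comp_neg_X (hJ : ∀ p, J (p.comp (-X)) = J p) (f g : R[X]) :
    momentForm J (f.comp (-X)) (g.comp (-X)) = momentForm J f g := by
  rw [momentForm_apply, ← mul_comp, hJ, momentForm_apply]

lemma sobolevForm_comp_neg_X (hJ : ∀ p, J (p.comp (-X)) = J p) (f g : R[X]) :
    sobolevForm J lam (f.comp (-X)) (g.comp (-X)) = sobolevForm J lam f g := by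
  rw [sobolevForm_apply, sobolevForm_apply, ← hJ (f * g), ← hJ (derivative f * derivative g)]
  simp [derivative_comp]

variable [LinearOrder R] [IsStrictOrderedRing R]

lemma sobolevForm_self_pos (hJ : ∀ f ≠ 0, 0 < J (f * f)) (hlam : 0 ≤ lam) {f : R[X]}
    (hf : f ≠ 0) : 0 < sobolevForm J lam f f := by
  have hderiv : 0 ≤ J (derivative f * derivative f) := by
    rcases eq_or_ne (derivative f) 0 with h | h
    · rw [h, zero_mul, map_zero]
    · exact (hJ _ h).le
  exact add_pos_of_pos_of_nonneg (hJ f hf) (mul_nonneg hlam hderiv)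

end Forms

lemma IsMonicOrthogonal.eval_ne_zero {J : ℝ[X] →ₗ[ℝ] ℝ} {b : ℝ}
    (hJ : ∀ p ≠ 0, (∀ x ≤ b, 0 ≤ p.eval x) → 0 < J p) {n : ℕ} {Q : ℝ[X]}
    (hQ : IsMonicOrthogonal (momentForm J) n Q) {x : ℝ} (hx : b ≤ x) : Q.eval x ≠ 0 := by
  intro hroot
  obtain ⟨G, rfl⟩ := dvd_iff_isRoot.2 hroot
  have hG : G ≠ 0 := right_ne_zero_of_mul hQ.isMonicOfDegree.ne_zero
  have hdeg : G.degree < n := by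
    rw [← hQ.isMonicOfDegree.natDegree_eq, ← natDegree_lt_iff_degree_lt hG,
      natDegree_mul (X_sub_C_ne_zero x) hG, natDegree_X_sub_C]
    lia
  have hpos : 0 < J ((C x - X) * (G * G)) := by
    refine hJ _ (mul_ne_zero ?_ (mul_ne_zero hG hG)) fun y hy => ?_
    · rw [← neg_sub]
      exact neg_ne_zero.2 (X_sub_C_ne_zero x)
    · rw [eval_mul, eval_mul, eval_sub, eval_C, eval_X]
      exact mul_nonneg (by linarith) (mul_self_nonneg _)
  have hzero := hQ.apply_eq_zero G hdeg
  rw [momentForm_apply] at hzero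
  rw [show (C x - X) * (G * G) = -((X - C x) * G * G) by ring, map_neg, hzero, neg_zero] at hpos
  exact hpos.false

lemma eval_pos_of_monic_of_forall_ne_zero {p : ℝ[X]} (hp : p.Monic) {b : ℝ}
    (hroot : ∀ x, b ≤ x → p.eval x ≠ 0) {x : ℝ} (hx : b ≤ x) : 0 < p.eval x := by
  by_contra! hneg
  obtain hdeg | hdeg := p.natDegree.eq_zero_or_pos
  · rw [hp.natDegree_eq_zero.1 hdeg, eval_one] at hneg
    linarith
  have hlim : Filter.Tendsto (fun x => p.eval x) Filter.atTop Filter.atTop :=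
    p.tendsto_atTop_of_leadingCoeff_nonneg (natDegree_pos_iff_degree_pos.1 hdeg)
      (hp.leadingCoeff.symm ▸ zero_le_one)
  obtain ⟨y, hy, hxy⟩ :=
    ((hlim.eventually_ge_atTop 0).and (Filter.eventually_ge_atTop x)).exists
  obtain ⟨z, hz, hz0⟩ := intermediate_value_Icc hxy p.continuous.continuousOn ⟨hneg, hy⟩
  exact hroot z (hx.trans hz.1) hz0

lemma exists_derivative_eq {K : Type*} [Field K] [CharZero K] (p : K[X]) :
    ∃ S, derivative S = p := by
  induction p using Polynomial.induction_on' with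
  | add p q hp hq =>
    obtain ⟨S, rfl⟩ := hp
    obtain ⟨T, rfl⟩ := hq
    exact ⟨S + T, derivative_add⟩
  | monomial m a =>
    refine ⟨monomial (m + 1) (a / (m + 1)), ?_⟩
    rw [derivative_monomial_succ, div_mul_cancel₀ _ (Nat.cast_add_one_ne_zero m)]

lemma exists_isMonicOfDegree_derivative_eq {K : Type*} [Field K] [CharZero K]
    {J : K[X] →ₗ[K] K} (hJ : J 1 ≠ 0) {m : ℕ} {P : K[X]} (hP : IsMonicOfDegree P m) :
    ∃ S, IsMonicOfDegree S (m + 1) ∧ derivative S = (m + 1 : K) • P ∧ J S = 0 := by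
  have hm : (m + 1 : K) ≠ 0 := Nat.cast_add_one_ne_zero m
  obtain ⟨T, hT⟩ := exists_derivative_eq ((m + 1 : K) • P)
  let S := T - (J T / J 1) • 1
  have hS : derivative S = (m + 1 : K) • P := by
    rw [derivative_sub, derivative_smul, derivative_one, smul_zero, sub_zero, hT]
  have hdeg : S.natDegree = m + 1 := by
    have hne : S.natDegree ≠ 0 :=
      derivative_ne_zero.1 (hS ▸ smul_ne_zero hm hP.ne_zero)
    have := congrArg natDegree hS
    rw [natDegree_derivative, natDegree_smul _ hm, hP.natDegree_eq] at this
    lia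
  have hmonic : S.Monic := by
    have := congrArg leadingCoeff hS
    rw [leadingCoeff_derivative, hdeg, smul_eq_C_mul, leadingCoeff_mul, leadingCoeff_C,
      hP.leadingCoeff_eq, mul_one, Nat.cast_add_one] at this
    exact mul_right_cancel₀ hm (this.trans (one_mul _).symm)
  refine ⟨S, ⟨hdeg, hmonic⟩, hS, ?_⟩
  rw [map_sub, map_smul, smul_eq_mul, div_mul_cancel₀ _ hJ, sub_self]

lemma intervalIntegrable_one_sub_sq_rpow {s : ℝ} (hs : -1 < s) :
    IntervalIntegrable (fun x : ℝ => (1 - x ^ 2) ^ s) volume (-1) 1 := by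
  have hleft : IntervalIntegrable (fun x : ℝ => (1 - x ^ 2) ^ s) volume (-1) 0 := by
    have hsing : IntervalIntegrable (fun x : ℝ => (1 + x) ^ s) volume (-1) 0 := by
      simpa using (intervalIntegral.intervalIntegrable_rpow' hs (a := 0) (b := 1)).comp_add_left 1
    have hcont : ContinuousOn (fun x : ℝ => (1 - x) ^ s) (uIcc (-1) 0) :=
      (by fun_prop : Continuous fun x : ℝ => 1 - x).continuousOn.rpow_const fun x hx =>
        Or.inl (by rw [uIcc_of_le (by norm_num)] at hx; linarith [hx.2])
    refine (hsing.mul_continuousOn hcont).congr fun x hx => ?_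
    rw [uIoc_of_le (by norm_num)] at hx
    rw [← Real.mul_rpow (by linarith [hx.1]) (by linarith [hx.2])]
    ring_nf
  have hright : IntervalIntegrable (fun x : ℝ => (1 - x ^ 2) ^ s) volume 0 1 := by
    simpa using hleft.symm.comp_sub_left 0
  exact hleft.trans hright

lemma intervalIntegrable_eval_mul_one_sub_sq_rpow {s : ℝ} (hs : -1 < s) (p : ℝ[X]) :
    IntervalIntegrable (fun x : ℝ => p.eval x * (1 - x ^ 2) ^ s) volume (-1) 1 :=
  (intervalIntegrable_one_sub_sq_rpow hs).continuousOn_mul p.continuous.continuousOn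

lemma hasDerivAt_eval_mul_one_sub_sq_rpow (s : ℝ) (p : ℝ[X]) {x : ℝ} (hx : x ∈ Ioo (-1) 1) :
    HasDerivAt (fun x => p.eval x * (1 - x ^ 2) ^ (s + 1))
      (((1 - X ^ 2) * derivative p - C (2 * (s + 1)) * X * p).eval x * (1 - x ^ 2) ^ s) x := by
  have hpos : 0 < 1 - x ^ 2 := by nlinarith [hx.1, hx.2]
  have hbase : HasDerivAt (fun x : ℝ => 1 - x ^ 2) (-(2 * x)) x := by
    simpa using (hasDerivAt_pow 2 x).const_sub 1
  refine ((p.hasDerivAt x).mul (hbase.rpow_const (p := s + 1) (Or.inl hpos.ne'))).congr_deriv ?_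
  rw [add_sub_cancel_right, Real.rpow_add_one hpos.ne']
  simp only [eval_sub, eval_mul, eval_one, eval_pow, eval_X, eval_C]
  ring

lemma natCast_add_two_mul_add_one_pos {α : ℝ} (hα : -1 / 2 < α) (j : ℕ) :
    0 < j + 2 * α + 1 := by
  have : (0 : ℝ) ≤ j := j.cast_nonneg
  linarith

section Gegenbauer

variable {α lam : ℝ} (hα : -1 / 2 < α)

/-- The moment functional `p ↦ ∫ p (1 - x²)^(α - 1/2)` of the Gegenbauer weight, linear because
polynomials are integrable against this weight when `-1/2 < α`; hence the proof argument. -/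
noncomputable def gegenbauerFunctional : ℝ[X] →ₗ[ℝ] ℝ where
  toFun p := ∫ x in (-1)..1, p.eval x * (1 - x ^ 2) ^ (α - 1 / 2)
  map_add' p q := by
    have hs : -1 < α - 1 / 2 := by linarith
    simp only [eval_add, add_mul]
    exact intervalIntegral.integral_add (intervalIntegrable_eval_mul_one_sub_sq_rpow hs p)
      (intervalIntegrable_eval_mul_one_sub_sq_rpow hs q)
  map_smul' c p := by
    simp only [eval_smul, smul_eq_mul, mul_assoc, intervalIntegral.integral_const_mul,
      RingHom.id_apply]

lemma gegenbauerFunctional_apply (p : ℝ[X]) :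
    gegenbauerFunctional hα p = ∫ x in (-1)..1, p.eval x * (1 - x ^ 2) ^ (α - 1 / 2) := rfl

lemma gegInner_eq_gegenbauerFunctional (f g : ℝ[X]) :
    gegInner α f g = gegenbauerFunctional hα (f * g) := by
  simp only [gegenbauerFunctional_apply, gegInner, eval_mul]
  rw [intervalIntegral.integral_of_le (by norm_num), integral_Ioc_eq_integral_Ioo]

lemma IsMonicGegSobolev.isMonicOrthogonal {n : ℕ} {Q : ℝ[X]} (hQ : IsMonicGegSobolev α lam n Q) :
    IsMonicOrthogonal (sobolevForm (gegenbauerFunctional hα) lam) n Q := by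
  obtain ⟨hmonic, hdeg, horth⟩ := hQ
  refine ⟨⟨hdeg, hmonic⟩, fun p hp => ?_⟩
  rw [sobolevForm_apply, ← gegInner_eq_gegenbauerFunctional, ← gegInner_eq_gegenbauerFunctional]
  exact horth p hp

lemma gegenbauerFunctional_comp_neg_X (p : ℝ[X]) :
    gegenbauerFunctional hα (p.comp (-X)) = gegenbauerFunctional hα p := by
  have h := intervalIntegral.integral_comp_neg (a := -1) (b := 1)
    fun x : ℝ => p.eval x * (1 - x ^ 2) ^ (α - 1 / 2)
  simp only [gegenbauerFunctional_apply, eval_comp, eval_neg, eval_X]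
  simpa only [neg_sq, neg_neg] using h

lemma gegenbauerFunctional_pos {p : ℝ[X]} (hp : p ≠ 0) (hnonneg : ∀ x ≤ 1, 0 ≤ p.eval x) :
    0 < gegenbauerFunctional hα p := by
  rw [gegenbauerFunctional_apply, intervalIntegral.integral_pos_iff_support_of_nonneg_ae'
    ?_ (intervalIntegrable_eval_mul_one_sub_sq_rpow (by linarith) p)]
  · have hsupp : Ioo (-1 : ℝ) 1 \ {x | p.IsRoot x} ⊆
        (Function.support fun x => p.eval x * (1 - x ^ 2) ^ (α - 1 / 2)) ∩ Ioc (-1) 1 :=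
      fun x ⟨hx, hroot⟩ => ⟨mul_ne_zero hroot
        (Real.rpow_pos_of_pos (by nlinarith [hx.1, hx.2]) _).ne', Ioo_subset_Ioc_self hx⟩
    refine ⟨by norm_num, lt_of_lt_of_le ?_ (measure_mono hsupp)⟩
    rw [measure_sdiff_null ((finite_setOfPred_isRoot hp).measure_zero _)]
    simp
  · rw [uIoc_of_le (by norm_num)]
    refine (ae_restrict_iff' measurableSet_Ioc).2 (Filter.Eventually.of_forall fun x hx => ?_)
    exact mul_nonneg (hnonneg x hx.2) (Real.rpow_nonneg (by nlinarith [hx.1, hx.2]) _)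

lemma gegenbauerFunctional_mul_self_pos {f : ℝ[X]} (hf : f ≠ 0) :
    0 < gegenbauerFunctional hα (f * f) :=
  gegenbauerFunctional_pos hα (mul_ne_zero hf hf) fun x _ => by
    rw [eval_mul]; exact mul_self_nonneg _

lemma gegenbauerFunctional_integral_by_parts (p : ℝ[X]) :
    gegenbauerFunctional hα
      ((1 - X ^ 2) * derivative p - C (2 * α + 1) * X * p) = 0 := by
  have hs : -1 < α - 1 / 2 := by linarith
  have hcont : Continuous fun x : ℝ => p.eval x * (1 - x ^ 2) ^ (α - 1 / 2 + 1) :=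
    p.continuous.mul ((by fun_prop : Continuous fun x : ℝ => 1 - x ^ 2).rpow_const
      fun _ => Or.inr (by linarith))
  rw [show 2 * α + 1 = 2 * (α - 1 / 2 + 1) by ring, gegenbauerFunctional_apply,
    intervalIntegral.integral_eq_sub_of_hasDerivAt_of_le (by norm_num) hcont.continuousOn
      (fun x hx => hasDerivAt_eval_mul_one_sub_sq_rpow _ p hx)
      (intervalIntegrable_eval_mul_one_sub_sq_rpow hs _)]
  have hzero : (0 : ℝ) ^ (α - 1 / 2 + 1) = 0 := Real.zero_rpow (by linarith)
  simp only [neg_sq, one_pow, sub_self, hzero, mul_zero]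

lemma gegenbauerFunctional_mul_X_pow_succ (S : ℝ[X]) (j : ℕ) :
    (j + 2 * α + 1) * gegenbauerFunctional hα (S * X ^ (j + 1)) =
      j * gegenbauerFunctional hα (S * X ^ (j - 1)) +
        (gegenbauerFunctional hα (derivative S * X ^ j) -
          gegenbauerFunctional hα (derivative S * X ^ (j + 2))) := by
  have hpoly : (1 - X ^ 2) * derivative (S * X ^ j) - C (2 * α + 1) * X * (S * X ^ j) =
      (derivative S * X ^ j - derivative S * X ^ (j + 2)) + (j : ℝ) • (S * X ^ (j - 1)) -
        (j + 2 * α + 1 : ℝ) • (S * X ^ (j + 1)) := by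
    rw [derivative_mul, derivative_X_pow]
    simp only [smul_eq_C_mul]
    rcases j with _ | j
    · simp only [Nat.cast_zero, C_0, map_add, map_one]
      ring
    · simp only [Nat.cast_add, Nat.cast_one, add_tsub_cancel_right, map_add, map_one]
      ring
  have h := gegenbauerFunctional_integral_by_parts hα (S * X ^ j)
  rw [hpoly] at h
  simp only [map_add, map_sub, map_smul, smul_eq_mul] at h
  linarith

lemma gegenbauerFunctional_mul_X_pow_succ_of_derivative {S : ℝ[X]} {k : ℕ}
    (hS : gegenbauerFunctional hα S = 0)
    (hderiv : ∀ i ≤ k, gegenbauerFunctional hα (derivative S * X ^ i) = 0) {j : ℕ} (hj : j ≤ k) :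
    (j + 2 * α + 1) * gegenbauerFunctional hα (S * X ^ (j + 1)) =
      -gegenbauerFunctional hα (derivative S * X ^ (j + 2)) := by
  induction j using Nat.strong_induction_on with
  | _ j ih =>
    have hprev : j * gegenbauerFunctional hα (S * X ^ (j - 1)) = 0 := by
      rcases j with _ | _ | i
      · rw [Nat.cast_zero, zero_mul]
      · rw [Nat.sub_self, pow_zero, mul_one, hS, mul_zero]
      · have h := ih i (by lia) (by lia)
        rw [hderiv (i + 2) hj, neg_zero] at h
        exact mul_eq_zero_of_right _
          ((mul_eq_zero.1 h).resolve_left (natCast_add_two_mul_add_one_pos hα i).ne')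
    rw [gegenbauerFunctional_mul_X_pow_succ, hprev, hderiv j hj, zero_add, zero_sub]

lemma gegenbauerFunctional_mul_eq_coeff_smul {S : ℝ[X]} {k : ℕ}
    (hS : gegenbauerFunctional hα S = 0)
    (hderiv : ∀ i ≤ k, gegenbauerFunctional hα (derivative S * X ^ i) = 0)
    (htop : gegenbauerFunctional hα (derivative S * X ^ (k + 2)) = 0)
    {p : ℝ[X]} (hp : p.degree < (k + 2 : ℕ)) :
    gegenbauerFunctional hα (S * p) = p.coeff k • gegenbauerFunctional hα (S * X ^ k) := by
  have hvanish : ∀ j ≤ k, gegenbauerFunctional hα (derivative S * X ^ (j + 2)) = 0 →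
      gegenbauerFunctional hα (S * X ^ (j + 1)) = 0 := fun j hj h => by
    have hrec := gegenbauerFunctional_mul_X_pow_succ_of_derivative hα hS hderiv hj
    rw [h, neg_zero] at hrec
    exact (mul_eq_zero.1 hrec).resolve_left (natCast_add_two_mul_add_one_pos hα j).ne'
  refine linearMap_eq_coeff_smul_of_degree_lt (L := momentForm (gegenbauerFunctional hα) S)
    (fun j hj => ?_) (hvanish k le_rfl htop) hp
  rcases j with _ | j
  · rw [momentForm_apply, pow_zero, mul_one, hS]
  · exact hvanish j (by lia) (hderiv _ hj)

lemma gegenbauerFunctional_mul_X_pow_nonpos {S : ℝ[X]} {k : ℕ}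
    (hS : gegenbauerFunctional hα S = 0)
    (hderiv : ∀ i ≤ k, gegenbauerFunctional hα (derivative S * X ^ i) = 0)
    (hnonneg : 0 ≤ gegenbauerFunctional hα (derivative S * X ^ (k + 1))) :
    gegenbauerFunctional hα (S * X ^ k) ≤ 0 := by
  rcases k with _ | k
  · rw [pow_zero, mul_one, hS]
  · have hrec := gegenbauerFunctional_mul_X_pow_succ_of_derivative hα hS hderiv k.le_succ
    exact nonpos_of_mul_nonpos_right (hrec.trans_le (neg_nonpos.2 hnonneg))
      (natCast_add_two_mul_add_one_pos hα k)

lemma momentForm_gegenbauerFunctional_anisotropic (f : ℝ[X])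
    (h : momentForm (gegenbauerFunctional hα) f f = 0) : f = 0 := by
  by_contra hf
  exact (gegenbauerFunctional_mul_self_pos hα hf).ne' h

lemma sobolevForm_gegenbauerFunctional_anisotropic (hlam : 0 ≤ lam) (f : ℝ[X])
    (h : sobolevForm (gegenbauerFunctional hα) lam f f = 0) : f = 0 := by
  by_contra hf
  exact (sobolevForm_self_pos (fun _ => gegenbauerFunctional_mul_self_pos hα) hlam hf).ne' h

lemma exists_sobolevForm_eq_coeff_mul {k : ℕ} {K : ℝ[X]}
    (hK : IsMonicOrthogonal (momentForm (gegenbauerFunctional hα)) (k + 1) K) (lam : ℝ) :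
    ∃ S : ℝ[X], ∃ c ≤ 0, IsMonicOfDegree S (k + 2) ∧
      derivative S = (k + 2 : ℝ) • K ∧ ∀ p : ℝ[X], p.degree < (k + 2 : ℕ) →
        sobolevForm (gegenbauerFunctional hα) lam S p = p.coeff k * c := by
  set J := gegenbauerFunctional hα
  obtain ⟨S, hSdeg, hSderiv, hS⟩ := exists_isMonicOfDegree_derivative_eq
    (J := J) (by simpa using (gegenbauerFunctional_mul_self_pos hα one_ne_zero).ne')
    hK.isMonicOfDegree
  replace hSderiv : derivative S = (k + 2 : ℝ) • K := by
    rw [hSderiv]; push_cast; ring_nf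
  have hmul (q : ℝ[X]) : J (derivative S * q) = (k + 2) * momentForm J K q := by
    rw [hSderiv, smul_mul_assoc, map_smul, smul_eq_mul, momentForm_apply]
  have hderiv : ∀ i ≤ k, J (derivative S * X ^ i) = 0 := fun i hi => by
    rw [hmul, hK.apply_X_pow_of_lt (by lia), mul_zero]
  have hself : 0 ≤ J (derivative S * X ^ (k + 1)) := by
    rw [hmul, hK.apply_X_pow_self]
    have := gegenbauerFunctional_mul_self_pos hα hK.isMonicOfDegree.ne_zero
    exact mul_nonneg (by positivity) this.le
  have htop : J (derivative S * X ^ (k + 2)) = 0 := by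
    rw [hmul, hK.apply_X_pow_succ (momentForm_gegenbauerFunctional_anisotropic hα)
      (momentForm_comp_neg_X (gegenbauerFunctional_comp_neg_X hα)), mul_zero]
  refine ⟨S, J (S * X ^ k), gegenbauerFunctional_mul_X_pow_nonpos hα hS hderiv hself, hSdeg,
    hSderiv, fun p hp => ?_⟩
  have hpderiv : (derivative p).degree < (k + 1 : ℕ) := by
    rw [degree_lt_iff_coeff_zero] at hp ⊢
    exact fun m hm => by rw [coeff_derivative, hp (m + 1) (by lia), zero_mul]
  rw [sobolevForm_apply, hmul, hK.apply_eq_zero _ hpderiv, mul_zero, mul_zero, add_zero,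
    gegenbauerFunctional_mul_eq_coeff_smul hα hS hderiv htop hp, smul_eq_mul]

lemma IsMonicOrthogonal.exists_derivative_eq_add_smul (hlam : 0 ≤ lam) {k : ℕ} {K P Q : ℝ[X]}
    (hK : IsMonicOrthogonal (momentForm (gegenbauerFunctional hα)) (k + 1) K)
    (hP : IsMonicOrthogonal (sobolevForm (gegenbauerFunctional hα) lam) k P)
    (hQ : IsMonicOrthogonal (sobolevForm (gegenbauerFunctional hα) lam) (k + 2) Q) :
    ∃ t : ℝ, 0 ≤ t ∧ derivative Q = (k + 2 : ℝ) • K + t • derivative P := by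
  obtain ⟨S, c, hc, hSdeg, hSderiv, hSform⟩ := exists_sobolevForm_eq_coeff_mul hα hK lam
  have hpos := sobolevForm_self_pos (fun _ => gegenbauerFunctional_mul_self_pos hα) hlam
    hP.isMonicOfDegree.ne_zero
  have haniso := sobolevForm_gegenbauerFunctional_anisotropic hα hlam
  have hneg := sobolevForm_comp_neg_X (lam := lam) (gegenbauerFunctional_comp_neg_X hα)
  have hsum := hP.add_smul haniso hneg hSdeg hSform
    (t := -c / sobolevForm (gegenbauerFunctional hα) lam P P)
    (by rw [div_mul_cancel₀ _ hpos.ne', add_neg_cancel])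
  refine ⟨_, div_nonneg (neg_nonneg.2 hc) hpos.le, ?_⟩
  rw [hQ.eq hsum haniso, derivative_add, derivative_smul, hSderiv]

lemma IsMonicOrthogonal.derivative_eval_pos (hlam : 0 ≤ lam) {n : ℕ} (hn : n ≠ 0) {Q : ℝ[X]}
    (hQ : IsMonicOrthogonal (sobolevForm (gegenbauerFunctional hα) lam) n Q) {x : ℝ}
    (hx : 1 ≤ x) : 0 < (derivative Q).eval x := by
  induction n using Nat.twoStepInduction generalizing Q with
  | zero => exact absurd rfl hn
  | one =>
    obtain ⟨r, rfl⟩ := isMonicOfDegree_one_iff.1 hQ.isMonicOfDegree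
    simp
  | more k ih _ =>
    obtain ⟨K, hK⟩ :=
      exists_isMonicOrthogonal (momentForm_gegenbauerFunctional_anisotropic hα) (k + 1)
    obtain ⟨P, hP⟩ :=
      exists_isMonicOrthogonal (sobolevForm_gegenbauerFunctional_anisotropic hα hlam) k
    obtain ⟨t, ht, hderiv⟩ := exists_derivative_eq_add_smul hα hlam hK hP hQ
    have hKpos : 0 < K.eval x := eval_pos_of_monic_of_forall_ne_zero hK.isMonicOfDegree.monic
      (fun _ => hK.eval_ne_zero fun _ => gegenbauerFunctional_pos hα) hx
    have hPnonneg : 0 ≤ (derivative P).eval x := by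
      rcases eq_or_ne k 0 with rfl | hk
      · rw [isMonicOfDegree_zero_iff.1 hP.isMonicOfDegree, derivative_one, eval_zero]
      · exact (ih hk hP).le
    rw [hderiv, eval_add, eval_smul, eval_smul, smul_eq_mul, smul_eq_mul]
    positivity

lemma IsMonicOrthogonal.subsingleton_isRoot_one_lt (hlam : 0 ≤ lam) {n : ℕ} {Q : ℝ[X]}
    (hQ : IsMonicOrthogonal (sobolevForm (gegenbauerFunctional hα) lam) n Q) :
    {x | Q.IsRoot x ∧ 1 < x}.Subsingleton := by
  rcases eq_or_ne n 0 with rfl | hn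
  · simp [isMonicOfDegree_zero_iff.1 hQ.isMonicOfDegree]
  have hmono : StrictMonoOn (fun x => Q.eval x) (Ioi 1) := by
    refine strictMonoOn_of_deriv_pos (convex_Ioi 1) Q.continuous.continuousOn fun x hx => ?_
    rw [interior_Ioi] at hx
    rw [Polynomial.deriv]
    exact hQ.derivative_eval_pos hα hlam hn hx.le
  exact fun x ⟨hx, hx1⟩ y ⟨hy, hy1⟩ => hmono.injOn hx1 hy1 (hx.trans hy.symm)

lemma IsMonicOrthogonal.isRoot_neg (hlam : 0 ≤ lam) {n : ℕ} {Q : ℝ[X]}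
    (hQ : IsMonicOrthogonal (sobolevForm (gegenbauerFunctional hα) lam) n Q) {x : ℝ}
    (hx : Q.IsRoot x) : Q.IsRoot (-x) := by
  have h := congrArg (eval x) (hQ.comp_neg_X
    (sobolevForm_gegenbauerFunctional_anisotropic hα hlam)
    (sobolevForm_comp_neg_X (gegenbauerFunctional_comp_neg_X hα)))
  rwa [eval_comp, eval_neg, eval_X, eval_smul, hx.eq_zero, smul_zero] at h

end Gegenbauer

lemma ncard_setOf_lt_abs_le_two {G : Type*} [AddCommGroup G] [LinearOrder G] [IsOrderedAddMonoid G]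
    {p : G → Prop} {b : G} (hneg : ∀ x, p x → p (-x)) (hp : {x | p x ∧ b < x}.Subsingleton) :
    {x | p x ∧ b < |x|}.ncard ≤ 2 := by
  set T := {x | p x ∧ b < x}
  have hT : T.ncard ≤ 1 := (ncard_le_one hp.finite).2 fun x hx y hy => hp hx hy
  have hsub : {x | p x ∧ b < |x|} ⊆ T ∪ Neg.neg '' T := by
    rintro x ⟨hx, hbx⟩
    rcases lt_abs.1 hbx with h | h
    · exact Or.inl ⟨hx, h⟩
    · exact Or.inr ⟨-x, ⟨hneg x hx, h⟩, neg_neg x⟩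
  calc {x | p x ∧ b < |x|}.ncard
      ≤ (T ∪ Neg.neg '' T).ncard := ncard_le_ncard hsub (hp.finite.union (hp.finite.image _))
    _ ≤ T.ncard + (Neg.neg '' T).ncard := ncard_union_le _ _
    _ ≤ 1 + 1 := add_le_add hT ((ncard_image_le hp.finite).trans hT)

theorem gegSobolev_zeros_outside_pair_general (α lam : ℝ) (hα : -1 / 2 < α) (hlam : 0 ≤ lam) (n : ℕ)
    (Q : Polynomial ℝ) (hQ : IsMonicGegSobolev α lam n Q) :
    {x : ℝ | Q.IsRoot x ∧ 1 < |x|}.ncard ≤ 2 ∧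
      ∀ x : ℝ, Q.IsRoot x → 1 < |x| → Q.IsRoot (-x) := by
  have hO := hQ.isMonicOrthogonal hα
  have hneg : ∀ x, Q.IsRoot x → Q.IsRoot (-x) := fun x => hO.isRoot_neg hα hlam
  exact ⟨ncard_setOf_lt_abs_le_two hneg (hO.subsingleton_isRoot_one_lt hα hlam),
    fun x hx _ => hneg x hx⟩

/-- For `-1/2 < α < 1/2` at most one symmetric pair of zeros of
`Q_{n,λ}^{(α)}` lies outside `[-1,1]`. -/
theorem gegSobolev_zeros_outside_pair (α lam : ℝ) (hα1 : -1/2 < α) (hα2 : α < 1/2)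
    (hlam : 0 ≤ lam) (n : ℕ) (hn : 1 ≤ n)
    (Q : Polynomial ℝ) (hQ : IsMonicGegSobolev α lam n Q) :
    {x : ℝ | Q.IsRoot x ∧ 1 < |x|}.ncard ≤ 2 ∧
      ∀ x : ℝ, Q.IsRoot x → 1 < |x| → Q.IsRoot (-x) :=
  gegSobolev_zeros_outside_pair_general α lam hα1 hlam n Q hQ
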